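/- Let X = X_{a,b} be the Bourgain–Delbaen space, Q : ℓ∞^* → X^* the restriction map, and C the weak*-closure of {Q e_k^* : k ∈ ℕ} in X^*. Then for every ε > 0 the modified ε-Szlenk index η(ε, C) is finite; that is, there is n < ω with P_n(ε, C) = ∅. -/

import Mathlib

open MeasureTheory Set Ordinal Filter
open scoped Classical

/-- `ℓ∞ = ℓ∞(ℕ)`. -/
noncomputable abbrev linf : Type := lp (fun _ : ℕ => ℝ) ⊤

/-- The `k`-th coordinate functional `e_k^*` on `ℓ∞`. -/
noncomputable def coordFn (k : ℕ) : linf →L[ℝ] ℝ :=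
  LinearMap.mkContinuous
    { toFun := fun x => x k
      map_add' := fun _ _ => rfl
      map_smul' := fun _ _ => rfl }
    1 (fun x => by
      rw [one_mul]
      exact lp.norm_apply_le_norm (E := fun _ : ℕ => ℝ) ENNReal.top_ne_zero x k)

/-- The `k`-th coordinate vector `e_k` of `ℓ∞`. -/
noncomputable def ek (k : ℕ) : linf := lp.single ⊤ k (1 : ℝ)

/-- `E_n = span{e_k : 1 ≤ k ≤ d n}`. -/
noncomputable def Esub (d : ℕ → ℕ) (n : ℕ) : Submodule ℝ linf :=
  Submodule.span ℝ {x : linf | ∃ k : ℕ, 1 ≤ k ∧ k ≤ d n ∧ x = ek k}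

/-- All the data of the Bourgain–Delbaen construction: the constants `a`, `b`, `λ`, the
dimensions `d n`, the enumeration `φ` of tuples `(σ',i,m,σ'',j)`, the coordinate projections
`π_m`, the embeddings `i_{m,n}` and the limit projections `P_m`, together with their defining
properties. -/
structure BDSetup where
  a : ℝ
  b : ℝ
  lam : ℝ
  hb : 0 < b
  hba : b < a
  ha : a < 1
  hlam : 1 < lam
  hineq : a + 2 * b * lam < lam
  /-- the dimensions -/
  d : ℕ → ℕ
  hd1 : d 1 = 1
  hd2 : d 2 = 2
  /-- the enumeration of the tuples `(σ', i, m, σ'', j)` -/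
  φ : ℕ → ℤ × ℕ × ℕ × ℤ × ℕ
  hφ : ∀ n : ℕ, 2 ≤ n → Set.BijOn φ {k : ℕ | d n < k ∧ k ≤ d (n + 1)}
      {q : ℤ × ℕ × ℕ × ℤ × ℕ | (q.1 = 1 ∨ q.1 = -1) ∧ (q.2.2.2.1 = 1 ∨ q.2.2.2.1 = -1) ∧
        1 ≤ q.2.2.1 ∧ q.2.2.1 < n ∧ 1 ≤ q.2.1 ∧ q.2.1 ≤ d q.2.2.1 ∧
        1 ≤ q.2.2.2.2 ∧ q.2.2.2.2 ≤ d n}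
  /-- the coordinate projections `π_m` -/
  pi : ℕ → (linf →L[ℝ] linf)
  hpi : ∀ (m : ℕ) (x : linf) (k : ℕ), pi m x k = if 1 ≤ k ∧ k ≤ d m then x k else 0
  /-- the embeddings `i_{m,n}` -/
  iMap : ℕ → ℕ → (linf →L[ℝ] linf)
  hi12 : ∀ x : linf, x ∈ Esub d 1 → iMap 1 2 x = x
  histep : ∀ n : ℕ, 2 ≤ n → ∀ x : linf, x ∈ Esub d n →
    iMap n (n + 1) x = x + ∑ k ∈ Finset.Ioc (d n) (d (n + 1)),
      (a * ((φ k).1 : ℝ) * x (φ k).2.1 +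
        b * (((φ k).2.2.2.1 : ℤ) : ℝ) *
          ((x - iMap (φ k).2.2.1 n (pi (φ k).2.2.1 x)) (φ k).2.2.2.2)) • ek k
  hicomp : ∀ m n : ℕ, 1 ≤ m → m < n → ∀ x : linf, x ∈ Esub d m →
    iMap m (n + 1) x = iMap n (n + 1) (iMap m n x)
  hinorm : ∀ m n : ℕ, 1 ≤ m → m < n → ∀ x : linf, x ∈ Esub d m → ‖iMap m n x‖ ≤ lam * ‖x‖
  /-- the coordinatewise limit projections `P_m` -/
  P : ℕ → (linf →L[ℝ] linf)
  hP0 : P 0 = 0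
  hPlim : ∀ m : ℕ, 1 ≤ m → ∀ (x : linf) (k : ℕ),
    Filter.Tendsto (fun n => (iMap m n (pi m x)) k) Filter.atTop (nhds (P m x k))
  hPproj : ∀ m : ℕ, (P m).comp (P m) = P m
  hPnorm : ∀ m : ℕ, ‖P m‖ ≤ lam

/-- The Bourgain–Delbaen space `X = X_{a,b}`, the closed linear span of `⋃ m, P_m(E_m)`. -/
noncomputable def Xsub (S : BDSetup) : Submodule ℝ linf :=
  (Submodule.span ℝ (⋃ m ∈ {m : ℕ | 1 ≤ m}, (S.P m) '' (Esub S.d m))).topologicalClosure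

/-- The restriction (quotient) map `Q : ℓ∞^* → X^*`. -/
noncomputable def QMap (S : BDSetup) (f : linf →L[ℝ] ℝ) : (Xsub S) →L[ℝ] ℝ :=
  f.comp (Xsub S).subtypeL

/-- The images `Q e_k^*` of the coordinate functionals in `X^*`. -/
noncomputable def Qe (S : BDSetup) (k : ℕ) : (Xsub S) →L[ℝ] ℝ := QMap S (coordFn k)

/-- The modified Szlenk sets `P_α(ε, B)` of a subset `B` of the dual of `Y`: at successor
steps one takes weak* limits of `ε`-norm-separated sequences in the previous set, and
intersections at limit steps. -/
noncomputable def PmodSet (Y : Type*) [NormedAddCommGroup Y] [NormedSpace ℝ Y]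
    (ε : ℝ) (B : Set (Y →L[ℝ] ℝ)) : Ordinal → Set (Y →L[ℝ] ℝ) :=
  fun α => Ordinal.limitRecOn α B
    (fun _ prev => {f | f ∈ B ∧ ∃ bs : ℕ → Y →L[ℝ] ℝ,
      (∀ n, bs n ∈ prev) ∧
      (∀ y : Y, Filter.Tendsto (fun n => bs n y) Filter.atTop (nhds (f y))) ∧
      (∀ n m : ℕ, n ≠ m → ε ≤ ‖bs n - bs m‖)})
    (fun β _ ih => ⋂ (γ : Ordinal) (h : γ < β), ih γ h)

/-- The weak*-closure of a set of functionals. -/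
def wstarCl {Y : Type*} [NormedAddCommGroup Y] [NormedSpace ℝ Y]
    (B : Set (Y →L[ℝ] ℝ)) : Set (Y →L[ℝ] ℝ) :=
  {f | ∀ (s : Finset Y) (δ : ℝ), 0 < δ → ∃ g ∈ B, ∀ y ∈ s, |g y - f y| < δ}

/-! ### Abstract part -/

/-- Ultrafilter version of the modified Szlenk derivative. -/
def DD {Y : Type*} [NormedAddCommGroup Y] [NormedSpace ℝ Y]
    (ε : ℝ) (A : Set (Y →L[ℝ] ℝ)) : Set (Y →L[ℝ] ℝ) :=
  {f | ∃ (bs : ℕ → Y →L[ℝ] ℝ) (U : Ultrafilter ℕ), (U : Filter ℕ) ≤ Filter.cofinite ∧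
    (∀ᶠ r in (U : Filter ℕ), bs r ∈ A) ∧
    (∀ y : Y, Filter.Tendsto (fun r => bs r y) (U : Filter ℕ) (nhds (f y))) ∧
    (∀ n m : ℕ, n ≠ m → ε ≤ ‖bs n - bs m‖)}

section DDlemmas
variable {Y : Type*} [NormedAddCommGroup Y] [NormedSpace ℝ Y]

theorem DD_mono {ε : ℝ} {A B : Set (Y →L[ℝ] ℝ)} (h : A ⊆ B) : DD ε A ⊆ DD ε B := by
  rintro f ⟨bs, U, h1, h2, h3, h4⟩
  exact ⟨bs, U, h1, h2.mono fun r hr => h hr, h3, h4⟩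

theorem DD_anti {ε ε' : ℝ} (hε : ε ≤ ε') (A : Set (Y →L[ℝ] ℝ)) : DD ε' A ⊆ DD ε A := by
  rintro f ⟨bs, U, h1, h2, h3, h4⟩
  exact ⟨bs, U, h1, h2, h3, fun n m hnm => hε.trans (h4 n m hnm)⟩

theorem DDit_mono {ε : ℝ} {A B : Set (Y →L[ℝ] ℝ)} (h : A ⊆ B) (n : ℕ) :
    (DD ε)^[n] A ⊆ (DD ε)^[n] B := by
  induction n with
  | zero => exact h
  | succ n ih => rw [Function.iterate_succ_apply', Function.iterate_succ_apply']; exact DD_mono ih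

theorem DDit_anti {ε ε' : ℝ} (hε : ε ≤ ε') (A : Set (Y →L[ℝ] ℝ)) (n : ℕ) :
    (DD ε')^[n] A ⊆ (DD ε)^[n] A := by
  induction n with
  | zero => exact subset_rfl
  | succ n ih =>
    rw [Function.iterate_succ_apply', Function.iterate_succ_apply']
    exact (DD_mono ih).trans (DD_anti hε _)

theorem DD_empty (ε : ℝ) : DD ε (∅ : Set (Y →L[ℝ] ℝ)) = ∅ := by
  ext f
  simp only [mem_empty_iff_false, iff_false]
  rintro ⟨bs, U, h1, h2, h3, h4⟩
  obtain ⟨r, hr⟩ := h2.exists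
  exact hr

theorem DDit_empty (ε : ℝ) (n : ℕ) : (DD ε)^[n] (∅ : Set (Y →L[ℝ] ℝ)) = ∅ := by
  induction n with
  | zero => rfl
  | succ n ih => rw [Function.iterate_succ_apply', ih, DD_empty]

theorem DD_union (ε : ℝ) (A B : Set (Y →L[ℝ] ℝ)) : DD ε (A ∪ B) ⊆ DD ε A ∪ DD ε B := by
  rintro f ⟨bs, U, h1, h2, h3, h4⟩
  have h2' : ∀ᶠ r in (U : Filter ℕ), bs r ∈ A ∨ bs r ∈ B := h2
  rcases Ultrafilter.eventually_or.1 h2' with h | h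
  · exact Or.inl ⟨bs, U, h1, h, h3, h4⟩
  · exact Or.inr ⟨bs, U, h1, h, h3, h4⟩

theorem DDit_union (ε : ℝ) (A B : Set (Y →L[ℝ] ℝ)) (n : ℕ) :
    (DD ε)^[n] (A ∪ B) ⊆ (DD ε)^[n] A ∪ (DD ε)^[n] B := by
  induction n with
  | zero => exact subset_rfl
  | succ n ih =>
    simp only [Function.iterate_succ_apply']
    exact (DD_mono ih).trans (DD_union _ _ _)

/-- closed under ultralimits -/
def UClosed (A : Set (Y →L[ℝ] ℝ)) : Prop :=
  ∀ (f : Y →L[ℝ] ℝ) (bs : ℕ → Y →L[ℝ] ℝ) (U : Ultrafilter ℕ),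
    (∀ᶠ r in (U : Filter ℕ), bs r ∈ A) →
    (∀ y : Y, Filter.Tendsto (fun r => bs r y) (U : Filter ℕ) (nhds (f y))) → f ∈ A

theorem UClosed.dd {A : Set (Y →L[ℝ] ℝ)} (hA : UClosed A) (ε : ℝ) : DD ε A ⊆ A := by
  rintro f ⟨bs, U, h1, h2, h3, h4⟩
  exact hA f bs U h2 h3

theorem UClosed.ddit {A : Set (Y →L[ℝ] ℝ)} (hA : UClosed A) (ε : ℝ) (n : ℕ) :
    (DD ε)^[n] A ⊆ A := by
  induction n with
  | zero => exact subset_rfl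
  | succ n ih =>
    rw [Function.iterate_succ_apply']
    exact (DD_mono ih).trans (hA.dd ε)

theorem UClosed.union {A B : Set (Y →L[ℝ] ℝ)} (hA : UClosed A) (hB : UClosed B) :
    UClosed (A ∪ B) := by
  intro f bs U h1 h2
  have h1' : ∀ᶠ r in (U : Filter ℕ), bs r ∈ A ∨ bs r ∈ B := h1
  rcases Ultrafilter.eventually_or.1 h1' with h | h
  · exact Or.inl (hA f bs U h h2)
  · exact Or.inr (hB f bs U h h2)

theorem DD_affine (ε : ℝ) (v : Y →L[ℝ] ℝ) (c : ℝ) (hc : c ≠ 0) (A : Set (Y →L[ℝ] ℝ)) :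
    DD ε ((fun h => v + c • h) '' A) ⊆ (fun h => v + c • h) '' (DD (ε / |c|) A) := by
  rintro f ⟨bs, U, h1, h2, h3, h4⟩
  refine ⟨c⁻¹ • (f - v), ⟨fun r => c⁻¹ • (bs r - v), U, h1, ?_, ?_, ?_⟩, ?_⟩
  · filter_upwards [h2] with r hr
    obtain ⟨h, hh, he⟩ := hr
    have : c⁻¹ • (bs r - v) = h := by
      rw [← he]; simp [smul_smul, hc]
    rw [this]; exact hh
  · intro y
    have := ((h3 y).sub_const (v y)).const_mul c⁻¹
    simpa using this
  · intro n m hnm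
    have h := h4 n m hnm
    have e1 : c⁻¹ • (bs n - v) - c⁻¹ • (bs m - v) = c⁻¹ • (bs n - bs m) := by
      ext y; simp; ring
    rw [e1, norm_smul, norm_inv, Real.norm_eq_abs, div_eq_inv_mul]
    exact mul_le_mul_of_nonneg_left h (by positivity)
  · simp [smul_smul, hc]

theorem DDit_affine (ε : ℝ) (v : Y →L[ℝ] ℝ) (c : ℝ) (hc : c ≠ 0) (A : Set (Y →L[ℝ] ℝ)) (n : ℕ) :
    (DD ε)^[n] ((fun h => v + c • h) '' A) ⊆ (fun h => v + c • h) '' ((DD (ε / |c|))^[n] A) := by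
  induction n with
  | zero => exact subset_rfl
  | succ n ih =>
    simp only [Function.iterate_succ_apply']
    exact (DD_mono ih).trans (DD_affine _ _ _ hc _)

theorem DD_bdd {ε K : ℝ} (hK : 2 * K < ε) {A : Set (Y →L[ℝ] ℝ)} (hA : ∀ f ∈ A, ‖f‖ ≤ K) :
    DD ε A = ∅ := by
  ext f
  simp only [mem_empty_iff_false, iff_false]
  rintro ⟨bs, U, h1, h2, h3, h4⟩
  obtain ⟨r, hr⟩ := h2.exists
  have hne : ∀ᶠ s in (U : Filter ℕ), s ≠ r := by
    apply h1
    simp [Filter.mem_cofinite]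
  obtain ⟨s, hs, hsr⟩ := (h2.and hne).exists
  have e1 := h4 s r hsr
  have e2 := norm_sub_le (bs s) (bs r)
  have e3 := hA _ hr
  have e4 := hA _ hs
  linarith

theorem ultra_const {α : Type*} (U : Ultrafilter ℕ) (u : ℕ → α) (F : Set α) (hF : F.Finite)
    (h : ∀ᶠ r in (U : Filter ℕ), u r ∈ F) : ∃ p ∈ F, ∀ᶠ r in (U : Filter ℕ), u r = p := by
  have h' : (⋃ p ∈ F, {r | u r = p}) ∈ U := by
    filter_upwards [h] with r hr
    simpa using hr
  exact (Ultrafilter.finite_biUnion_mem_iff hF).1 h'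

theorem ultra_dich (U : Ultrafilter ℕ) (u : ℕ → ℕ) :
    (∃ m, ∀ᶠ r in (U : Filter ℕ), u r = m) ∨ Tendsto u (U : Filter ℕ) atTop := by
  by_cases h : Tendsto u (U : Filter ℕ) atTop
  · exact Or.inr h
  · left
    rw [tendsto_atTop] at h
    push Not at h
    obtain ⟨M, hM⟩ := h
    have hM' : ∀ᶠ r in (U : Filter ℕ), u r ∈ Set.Iio M := by
      filter_upwards [hM] with r hr
      simpa using hr
    obtain ⟨p, _, hp⟩ := ultra_const U u _ (Set.finite_Iio M) hM'
    exact ⟨p, hp⟩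

end DDlemmas

/-- Index set of the pieces. -/
def validP (d : ℕ → ℕ) (a b : ℝ) (p : ℕ × ℕ × ℝ × ℝ) : Prop :=
  1 ≤ p.1 ∧ 1 ≤ p.2.1 ∧ p.2.1 ≤ d p.1 ∧ (p.2.2.1 = a ∨ p.2.2.1 = -a) ∧
    (p.2.2.2 = b ∨ p.2.2.2 = -b)

section Abs
variable {Y : Type*} [NormedAddCommGroup Y] [NormedSpace ℝ Y]

def CR (C : Set (Y →L[ℝ] ℝ)) (R : ℕ → Y →L[ℝ] Y) (m : ℕ) : Set (Y →L[ℝ] ℝ) :=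
  (fun h : Y →L[ℝ] ℝ => h.comp (R m)) '' C

def BSet (C : Set (Y →L[ℝ] ℝ)) (R : ℕ → Y →L[ℝ] Y) (a : ℝ) (m : ℕ) : Set (Y →L[ℝ] ℝ) :=
  (fun h : Y →L[ℝ] ℝ => 0 + a • h) '' CR C R m ∪ (fun h : Y →L[ℝ] ℝ => 0 + (-a) • h) '' CR C R m

def ASet (C : Set (Y →L[ℝ] ℝ)) (R : ℕ → Y →L[ℝ] Y) (e : ℕ → Y →L[ℝ] ℝ)
    (m : ℕ) (p : ℕ × ℕ × ℝ × ℝ) : Set (Y →L[ℝ] ℝ) :=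
  (fun h : Y →L[ℝ] ℝ => p.2.2.1 • (e p.2.1).comp (R m) + p.2.2.2 • h) '' CR C R (max p.1 m)

/-- limit functionals -/
def TSet (C : Set (Y →L[ℝ] ℝ)) (R : ℕ → Y →L[ℝ] Y) (e : ℕ → Y →L[ℝ] ℝ) (d : ℕ → ℕ) (a b : ℝ)
    (m : ℕ) : Set (Y →L[ℝ] ℝ) :=
  BSet C R a m ∪ {f | ∃ p, validP d a b p ∧ f ∈ ASet C R e m p}

structure BDAbs (C : Set (Y →L[ℝ] ℝ)) (R : ℕ → Y →L[ℝ] Y) (e : ℕ → Y →L[ℝ] ℝ)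
    (d : ℕ → ℕ) (a b K : ℝ) : Prop where
  hb : 0 < b
  hba : b < a
  ha : a < 1
  hC1 : ∀ f ∈ C, ‖f‖ ≤ 1
  he : ∀ i, 1 ≤ i → e i ∈ C
  hlim : ∀ (U : Ultrafilter ℕ) (g : ℕ → Y →L[ℝ] ℝ), (∀ᶠ r in (U : Filter ℕ), g r ∈ C) →
    ∃ h ∈ C, ∀ y, Tendsto (fun r => g r y) (U : Filter ℕ) (nhds (h y))
  hR : ∀ m, ‖R m‖ ≤ K
  hRid : R 0 = ContinuousLinearMap.id ℝ Y
  hRR : ∀ m' m, 1 ≤ m' → (R m').comp (R m) = R (max m' m)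
  hR0 : ∀ y, Tendsto (fun m => R m y) atTop (nhds 0)

namespace BDAbs
variable {C : Set (Y →L[ℝ] ℝ)} {R : ℕ → Y →L[ℝ] Y} {e : ℕ → Y →L[ℝ] ℝ}
  {d : ℕ → ℕ} {a b K : ℝ}

theorem uclosed_image (S : BDAbs C R e d a b K) (v : Y →L[ℝ] ℝ) (c : ℝ) (m : ℕ) :
    UClosed ((fun h : Y →L[ℝ] ℝ => v + c • h) '' CR C R m) := by
  intro f bs U h1 h2
  have h1' : ∀ r, ∃ g : Y →L[ℝ] ℝ, bs r ∈ (fun h : Y →L[ℝ] ℝ => v + c • h) '' CR C R m →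
      g ∈ C ∧ bs r = v + c • g.comp (R m) := by
    intro r
    by_cases hr : bs r ∈ (fun h : Y →L[ℝ] ℝ => v + c • h) '' CR C R m
    · obtain ⟨_, ⟨g, hg, rfl⟩, hh⟩ := hr
      exact ⟨g, fun _ => ⟨hg, hh.symm⟩⟩
    · exact ⟨0, fun h => absurd h hr⟩
  choose g hg using h1'
  obtain ⟨h, hC, hh⟩ := S.hlim U g (h1.mono fun r hr => (hg r hr).1)
  refine ⟨h.comp (R m), ⟨h, hC, rfl⟩, ?_⟩
  ext y
  have t1 : Tendsto (fun r => bs r y) (U : Filter ℕ) (nhds (v y + c * h (R m y))) := by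
    have := ((hh (R m y)).const_mul c).const_add (v y)
    refine this.congr' ?_
    filter_upwards [h1] with r hr
    rw [(hg r hr).2]
    simp
  have := tendsto_nhds_unique t1 (h2 y)
  simpa using this

theorem uclosed_B (S : BDAbs C R e d a b K) (m : ℕ) : UClosed (BSet C R a m) :=
  (S.uclosed_image _ _ _).union (S.uclosed_image _ _ _)

theorem uclosed_A (S : BDAbs C R e d a b K) (m : ℕ) (p) : UClosed (ASet C R e m p) :=
  S.uclosed_image _ _ _

/-- The dichotomy: a family of pieces is eventually constant, or the limit is in `BSet`. -/
theorem dich (S : BDAbs C R e d a b K) (m : ℕ) (U : Ultrafilter ℕ) (f : Y →L[ℝ] ℝ)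
    (p : ℕ → ℕ × ℕ × ℝ × ℝ) (bs : ℕ → Y →L[ℝ] ℝ)
    (h1 : ∀ᶠ r in (U : Filter ℕ), validP d a b (p r) ∧ bs r ∈ ASet C R e m (p r))
    (h2 : ∀ y : Y, Tendsto (fun r => bs r y) (U : Filter ℕ) (nhds (f y))) :
    (∃ q, validP d a b q ∧ ∀ᶠ r in (U : Filter ℕ), p r = q) ∨ f ∈ BSet C R a m := by
  rcases ultra_dich U (fun r => (p r).1) with ⟨m', hm'⟩ | htop
  · left
    have hfin : (({m'} : Set ℕ) ×ˢ (Set.Icc 1 (d m')) ×ˢ ({a, -a} : Set ℝ) ×ˢ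
        ({b, -b} : Set ℝ)).Finite := by
      refine Set.Finite.prod (Set.finite_singleton _) (Set.Finite.prod (Set.finite_Icc _ _)
        (Set.Finite.prod ?_ ?_)) <;> simp
    obtain ⟨q, _, hq⟩ := ultra_const U p _ hfin (by
      filter_upwards [h1, hm'] with r hr hr'
      obtain ⟨⟨_, v2, v3, v4, v5⟩, _⟩ := hr
      rw [hr'] at v3
      simp only [Set.mem_prod, Set.mem_singleton_iff, Set.mem_insert_iff, Set.mem_Icc]
      exact ⟨hr', ⟨v2, v3⟩, v4, v5⟩)
    obtain ⟨r, hr, hr'⟩ := (h1.and hq).exists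
    exact ⟨q, hr' ▸ hr.1, hq⟩
  · right
    obtain ⟨c, hc, hcU⟩ := ultra_const U (fun r => (p r).2.2.1) ({a, -a} : Set ℝ) (by simp)
      (h1.mono fun r hr => by simpa using hr.1.2.2.2.1)
    obtain ⟨h, hhC, hh⟩ := S.hlim U (fun r => e (p r).2.1)
      (h1.mono fun r hr => S.he _ hr.1.2.1)
    have key : f = 0 + c • h.comp (R m) := by
      ext y
      have t1 : Tendsto (fun r => c * e (p r).2.1 (R m y)) (U : Filter ℕ)
          (nhds (c * h (R m y))) := (hh (R m y)).const_mul c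
      have t2 : Tendsto (fun r => bs r y - c * e (p r).2.1 (R m y)) (U : Filter ℕ) (nhds 0) := by
        have htop' : Tendsto (fun r => max (p r).1 m) (U : Filter ℕ) atTop :=
          tendsto_atTop_mono (fun r => le_max_left _ _) htop
        have t3 : Tendsto (fun r => |b| * ‖R (max (p r).1 m) y‖) (U : Filter ℕ) (nhds 0) := by
          have := (((S.hR0 y).comp htop').norm).const_mul |b|
          simpa using this
        refine squeeze_zero_norm' ?_ t3
        filter_upwards [h1, hcU] with r hr hr'
        obtain ⟨⟨_, _, _, _, v5⟩, ⟨_, ⟨g, hg, rfl⟩, hgr⟩⟩ := hr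
        rw [← hgr]
        simp only [_root_.add_apply, _root_.smul_apply,
          ContinuousLinearMap.comp_apply, _root_.smul_eq_mul]
        rw [hr', add_sub_cancel_left, norm_mul, Real.norm_eq_abs]
        have e1 : |(p r).2.2.2| = |b| := by rcases v5 with v | v <;> rw [v] <;> simp
        rw [e1]
        refine mul_le_mul_of_nonneg_left ?_ (abs_nonneg _)
        refine (g.le_opNorm _).trans ?_
        have := S.hC1 g hg
        nlinarith [norm_nonneg (R (max (p r).1 m) y)]
      have t4 := t2.add t1
      simp only [sub_add_cancel, zero_add] at t4
      have := tendsto_nhds_unique (h2 y) t4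
      simpa using this
    rw [key]
    rcases hc with rfl | hc
    · exact Or.inl ⟨_, ⟨h, hhC, rfl⟩, rfl⟩
    · rw [Set.mem_singleton_iff.1 hc]
      exact Or.inr ⟨_, ⟨h, hhC, rfl⟩, rfl⟩

theorem uclosed_T (S : BDAbs C R e d a b K) (m : ℕ) : UClosed (TSet C R e d a b m) := by
  intro f bs U h1 h2
  have h1' : ∀ᶠ r in (U : Filter ℕ), bs r ∈ BSet C R a m ∨
      ∃ p, validP d a b p ∧ bs r ∈ ASet C R e m p := h1
  rcases Ultrafilter.eventually_or.1 h1' with h | h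
  · exact Or.inl (S.uclosed_B m f bs U h h2)
  · have h' : ∀ r, ∃ p, (∃ p, validP d a b p ∧ bs r ∈ ASet C R e m p) →
        validP d a b p ∧ bs r ∈ ASet C R e m p := by
      intro r
      by_cases hr : ∃ p, validP d a b p ∧ bs r ∈ ASet C R e m p
      · obtain ⟨p, hp⟩ := hr
        exact ⟨p, fun _ => hp⟩
      · exact ⟨(0, 0, 0, 0), fun h => absurd h hr⟩
    choose p hp using h'
    have hpU := h.mono fun r hr => hp r hr
    rcases S.dich m U f p bs hpU h2 with ⟨q, hq, hqU⟩ | hB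
    · right
      refine ⟨q, hq, S.uclosed_A m q f bs U ?_ h2⟩
      filter_upwards [hpU, hqU] with r hr hr'
      exact hr' ▸ hr.2
    · exact Or.inl hB

theorem T_comp (S : BDAbs C R e d a b K) (m : ℕ) (f : Y →L[ℝ] ℝ)
    (hf : f ∈ TSet C R e d a b 0) : f.comp (R m) ∈ TSet C R e d a b m := by
  rcases hf with (⟨_, ⟨g, hg, rfl⟩, rfl⟩ | ⟨_, ⟨g, hg, rfl⟩, rfl⟩) |
    ⟨p, hp, ⟨_, ⟨g, hg, rfl⟩, rfl⟩⟩
  · refine Or.inl (Or.inl ⟨_, ⟨g, hg, rfl⟩, ?_⟩)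
    ext y; simp [S.hRid]
  · refine Or.inl (Or.inr ⟨_, ⟨g, hg, rfl⟩, ?_⟩)
    ext y; simp [S.hRid]
  · refine Or.inr ⟨p, hp, ⟨_, ⟨g, hg, rfl⟩, ?_⟩⟩
    ext y
    have := congrArg (fun T : Y →L[ℝ] Y => T y) (S.hRR p.1 m hp.1)
    simp only [ContinuousLinearMap.comp_apply] at this
    simp [S.hRid, ← this]

theorem DD_CR (S : BDAbs C R e d a b K)
    (hstruct : ∀ f ∈ C, (∃ k, f = e k) ∨ f ∈ TSet C R e d a b 0)
    (hL : ∀ (U : Ultrafilter ℕ) (k : ℕ → ℕ) (g : Y →L[ℝ] ℝ), Tendsto k (U : Filter ℕ) atTop →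
      (∀ y, Tendsto (fun r => e (k r) y) (U : Filter ℕ) (nhds (g y))) → g ∈ TSet C R e d a b 0)
    {ε : ℝ} (hε : 0 < ε) (m : ℕ) : DD ε (CR C R m) ⊆ TSet C R e d a b m := by
  rintro f ⟨bs, U, h1, h2, h3, h4⟩
  have h' : ∀ r, ∃ g, bs r ∈ CR C R m → g ∈ C ∧ bs r = g.comp (R m) := by
    intro r
    by_cases hr : bs r ∈ CR C R m
    · obtain ⟨g, hg, hh⟩ := hr
      exact ⟨g, fun _ => ⟨hg, hh.symm⟩⟩
    · exact ⟨0, fun h => absurd h hr⟩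
  choose g hg using h'
  obtain ⟨h, hhC, hh⟩ := S.hlim U g (h2.mono fun r hr => (hg r hr).1)
  have hfh : f = h.comp (R m) := by
    ext y
    refine tendsto_nhds_unique (h3 y) ((hh (R m y)).congr' ?_)
    filter_upwards [h2] with r hr
    rw [(hg r hr).2]; rfl
  rw [hfh]
  apply S.T_comp
  have hor : ∀ᶠ r in (U : Filter ℕ), (∃ k, g r = e k) ∨ g r ∈ TSet C R e d a b 0 :=
    h2.mono fun r hr => hstruct _ (hg r hr).1
  rcases Ultrafilter.eventually_or.1 hor with hk | hT
  · have h' : ∀ r, ∃ k, (∃ k, g r = e k) → g r = e k := by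
      intro r
      by_cases hr : ∃ k, g r = e k
      · obtain ⟨k, hk⟩ := hr
        exact ⟨k, fun _ => hk⟩
      · exact ⟨0, fun h => absurd h hr⟩
    choose k hk' using h'
    rcases ultra_dich U k with ⟨k0, hk0⟩ | htop
    · exfalso
      have hall := (h2.and hk).and hk0
      obtain ⟨r, hr⟩ := hall.exists
      have hne : ∀ᶠ s in (U : Filter ℕ), s ≠ r := by
        apply h1
        simp [Filter.mem_cofinite]
      obtain ⟨s, hs, hsr⟩ := (hall.and hne).exists
      have e1 := h4 s r hsr
      rw [(hg s hs.1.1).2, (hg r hr.1.1).2, hk' s hs.1.2, hk' r hr.1.2, hs.2, hr.2, _root_.sub_self,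
        norm_zero] at e1
      linarith
    · refine hL U k h htop fun y => (hh y).congr' ?_
      filter_upwards [hk] with r hr
      rw [← hk' r hr]
  · exact S.uclosed_T 0 h g U hT hh

theorem DDit_T (S : BDAbs C R e d a b K) (ε : ℝ) (m n : ℕ) :
    (DD ε)^[n] (TSet C R e d a b m) ⊆
      BSet C R a m ∪ {f | ∃ p, validP d a b p ∧ f ∈ (DD ε)^[n] (ASet C R e m p)} := by
  induction n with
  | zero => exact subset_rfl
  | succ n ih =>
    simp only [Function.iterate_succ_apply']
    refine (DD_mono ih).trans ((DD_union _ _ _).trans ?_)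
    rintro f (hf | ⟨bs, U, h1, h2, h3, h4⟩)
    · exact Or.inl ((S.uclosed_B m).dd ε hf)
    · have h' : ∀ r, ∃ p, (∃ p, validP d a b p ∧ bs r ∈ (DD ε)^[n] (ASet C R e m p)) →
          validP d a b p ∧ bs r ∈ (DD ε)^[n] (ASet C R e m p) := by
        intro r
        by_cases hr : ∃ p, validP d a b p ∧ bs r ∈ (DD ε)^[n] (ASet C R e m p)
        · obtain ⟨p, hp⟩ := hr
          exact ⟨p, fun _ => hp⟩
        · exact ⟨(0, 0, 0, 0), fun h => absurd h hr⟩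
      choose p hp using h'
      have hpU := Filter.Eventually.mono h2 fun r hr => hp r hr
      rcases S.dich m U f p bs (hpU.mono fun r hr =>
        ⟨hr.1, (S.uclosed_A m (p r)).ddit ε n hr.2⟩) h3 with ⟨q, hq, hqU⟩ | hB
      · right
        refine ⟨q, hq, bs, U, h1, ?_, h3, h4⟩
        filter_upwards [hpU, hqU] with r hr hr'
        exact hr' ▸ hr.2
      · exact Or.inl hB

theorem step (S : BDAbs C R e d a b K)
    (hstruct : ∀ f ∈ C, (∃ k, f = e k) ∨ f ∈ TSet C R e d a b 0)
    (hL : ∀ (U : Ultrafilter ℕ) (k : ℕ → ℕ) (g : Y →L[ℝ] ℝ), Tendsto k (U : Filter ℕ) atTop →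
      (∀ y, Tendsto (fun r => e (k r) y) (U : Filter ℕ) (nhds (g y))) → g ∈ TSet C R e d a b 0)
    {ε : ℝ} (hε : 0 < ε) (n : ℕ) (hn : ∀ m, (DD (ε / a))^[n] (CR C R m) = ∅) (m : ℕ) :
    (DD ε)^[n + (n + 1)] (CR C R m) = ∅ := by
  have hb := S.hb
  have ha : 0 < a := S.hb.trans S.hba
  have hA : ∀ p, validP d a b p → (DD ε)^[n] (ASet C R e m p) = ∅ := by
    intro p hp
    have hc : |p.2.2.2| = b := by
      rcases hp.2.2.2.2 with v | v <;> rw [v] <;> simp [abs_of_pos hb]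
    have hc0 : p.2.2.2 ≠ 0 := by
      intro h0; rw [h0, abs_zero] at hc; linarith
    rw [← Set.subset_empty_iff]
    refine (DDit_affine ε _ _ hc0 _ n).trans ?_
    rw [hc]
    have hle : ε / a ≤ ε / b := div_le_div_of_nonneg_left hε.le hb S.hba.le
    have := (DDit_anti hle (CR C R (max p.1 m)) n)
    rw [hn, Set.subset_empty_iff] at this
    rw [this, Set.image_empty]
  have h1 : (DD ε)^[n + 1] (CR C R m) ⊆ BSet C R a m := by
    rw [Function.iterate_succ_apply]
    refine (DDit_mono (S.DD_CR hstruct hL hε m) n).trans ((S.DDit_T ε m n).trans ?_)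
    rintro f (hf | ⟨p, hp, hf⟩)
    · exact hf
    · rw [hA p hp] at hf; exact hf.elim
  rw [Function.iterate_add_apply, ← Set.subset_empty_iff]
  refine (DDit_mono h1 n).trans ((DDit_union _ _ _ _).trans ?_)
  refine Set.union_subset ?_ ?_
  · refine (DDit_affine ε _ _ ha.ne' _ n).trans ?_
    rw [abs_of_pos ha, hn, Set.image_empty]
  · refine (DDit_affine ε _ _ (neg_ne_zero.2 ha.ne') _ n).trans ?_
    rw [abs_neg, abs_of_pos ha, hn, Set.image_empty]

theorem final (S : BDAbs C R e d a b K)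
    (hstruct : ∀ f ∈ C, (∃ k, f = e k) ∨ f ∈ TSet C R e d a b 0)
    (hL : ∀ (U : Ultrafilter ℕ) (k : ℕ → ℕ) (g : Y →L[ℝ] ℝ), Tendsto k (U : Filter ℕ) atTop →
      (∀ y, Tendsto (fun r => e (k r) y) (U : Filter ℕ) (nhds (g y))) → g ∈ TSet C R e d a b 0)
    {ε : ℝ} (hε : 0 < ε) : ∃ n, (DD ε)^[n] C = ∅ := by
  have ha : 0 < a := S.hb.trans S.hba
  have main : ∀ (N : ℕ) (ε : ℝ), 0 < ε → 2 * K < ε / a ^ N →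
      ∃ n, ∀ m, (DD ε)^[n] (CR C R m) = ∅ := by
    intro N
    induction N with
    | zero =>
      intro ε hε h
      refine ⟨1, fun m => ?_⟩
      simp only [pow_zero, _root_.div_one] at h
      refine DD_bdd (Y := Y) h ?_
      rintro _ ⟨g, hg, rfl⟩
      refine (ContinuousLinearMap.opNorm_comp_le _ _).trans ?_
      have h1 := S.hC1 g hg
      have h2 := S.hR m
      nlinarith [norm_nonneg (R m), norm_nonneg g]
    | succ N ih =>
      intro ε hε h
      obtain ⟨n, hn⟩ := ih (ε / a) (by positivity) (by rwa [div_div, ← pow_succ'])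
      exact ⟨_, S.step hstruct hL hε n hn⟩
  have hN : ∃ N : ℕ, 2 * K < ε / a ^ N := by
    have hpos : 0 < ε / (|2 * K| + 1) := by positivity
    obtain ⟨N, hN⟩ := exists_pow_lt_of_lt_one hpos S.ha
    refine ⟨N, ?_⟩
    rw [lt_div_iff₀ (by positivity)] at hN ⊢
    have h2 : 0 < a ^ N := by positivity
    nlinarith [le_abs_self (2 * K)]
  obtain ⟨N, hN⟩ := hN
  obtain ⟨n, hn⟩ := main N ε hε hN
  refine ⟨n, ?_⟩
  have := hn 0
  rwa [show CR C R 0 = C by simp [CR, S.hRid]] at this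

end BDAbs
end Abs

theorem Pmod_sub {Y : Type*} [NormedAddCommGroup Y] [NormedSpace ℝ Y]
    (ε : ℝ) (B : Set (Y →L[ℝ] ℝ)) (n : ℕ) :
    PmodSet Y ε B (n : Ordinal) ⊆ (DD ε)^[n] B := by
  induction n with
  | zero => simp [PmodSet]
  | succ n ih =>
    rw [Function.iterate_succ_apply']
    intro f hf
    rw [Nat.cast_succ] at hf
    unfold PmodSet at hf
    rw [Ordinal.limitRecOn_add_one] at hf
    obtain ⟨_, bs, h1, h2, h3⟩ := hf
    exact ⟨bs, Filter.hyperfilter ℕ, Filter.hyperfilter_le_cofinite,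
      Filter.Eventually.of_forall fun r => ih (h1 r),
      fun y => (h2 y).mono_left (by
        rw [← Nat.cofinite_eq_atTop]; exact Filter.hyperfilter_le_cofinite), h3⟩

/-! ### Concrete part -/

theorem coordFn_apply (k : ℕ) (x : linf) : coordFn k x = x k := rfl

theorem ek_apply (k j : ℕ) : (ek k) j = if j = k then (1 : ℝ) else 0 := by
  unfold ek
  rw [lp.single_apply]
  split_ifs with h
  · subst h; simp
  · simp [Pi.single_apply, h]

theorem mem_Esub_iff (d : ℕ → ℕ) (n : ℕ) (x : linf) :
    x ∈ Esub d n ↔ ∀ k, ¬ (1 ≤ k ∧ k ≤ d n) → x k = 0 := by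
  constructor
  · intro hx k hk
    have hle : Esub d n ≤ LinearMap.ker (coordFn k : linf →ₗ[ℝ] ℝ) := by
      unfold Esub
      rw [Submodule.span_le]
      rintro _ ⟨j, hj1, hj2, rfl⟩
      simp only [SetLike.mem_coe, LinearMap.mem_ker]
      change (ek j) k = 0
      rw [ek_apply, if_neg]
      rintro rfl
      exact hk ⟨hj1, hj2⟩
    exact hle hx
  · intro h
    have hx : x = ∑ k ∈ Finset.Icc 1 (d n), (x k) • ek k := by
      apply lp.ext
      funext j
      rw [← coordFn_apply, ← coordFn_apply, map_sum]
      simp only [map_smul, coordFn_apply, ek_apply]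
      by_cases hj : 1 ≤ j ∧ j ≤ d n
      · rw [Finset.sum_eq_single j]
        · simp
        · intro k _ hk
          simp [Ne.symm hk]
        · intro hj'
          exact absurd (Finset.mem_Icc.2 hj) hj'
      · rw [h j hj, Finset.sum_eq_zero]
        intro k hk
        rw [if_neg]
        · simp
        · rintro rfl
          exact hj (Finset.mem_Icc.1 hk)
    rw [hx]
    refine Submodule.sum_mem _ fun k hk => Submodule.smul_mem _ _ (Submodule.subset_span ?_)
    exact ⟨k, (Finset.mem_Icc.1 hk).1, (Finset.mem_Icc.1 hk).2, rfl⟩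

namespace BDSetup
variable (S : BDSetup)

theorem d_pos_lt (n : ℕ) (hn : 1 ≤ n) : 1 ≤ S.d n ∧ S.d n < S.d (n + 1) := by
  induction n, hn using Nat.le_induction with
  | base => rw [S.hd1, S.hd2]; norm_num
  | succ n hn ih =>
    have h1 : 1 ≤ S.d (n + 1) := by omega
    refine ⟨h1, ?_⟩
    have hs := (S.hφ (n + 1) (by omega)).surjOn
    have hm : ((1, 1, 1, 1, 1) : ℤ × ℕ × ℕ × ℤ × ℕ) ∈
      {q : ℤ × ℕ × ℕ × ℤ × ℕ | (q.1 = 1 ∨ q.1 = -1) ∧ (q.2.2.2.1 = 1 ∨ q.2.2.2.1 = -1) ∧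
        1 ≤ q.2.2.1 ∧ q.2.2.1 < n + 1 ∧ 1 ≤ q.2.1 ∧ q.2.1 ≤ S.d q.2.2.1 ∧
        1 ≤ q.2.2.2.2 ∧ q.2.2.2.2 ≤ S.d (n + 1)} := by
      refine ⟨Or.inl rfl, Or.inl rfl, le_rfl, by simp; omega, le_rfl, by simp [S.hd1], le_rfl, h1⟩
    obtain ⟨k, ⟨hk1, hk2⟩, _⟩ := hs hm
    omega

theorem d_mono {m n : ℕ} (hm : 1 ≤ m) (hmn : m ≤ n) : S.d m ≤ S.d n := by
  induction n, hmn using Nat.le_induction with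
  | base => exact le_rfl
  | succ n hn ih => exact ih.trans (S.d_pos_lt n (by omega)).2.le

theorem d_ge (n : ℕ) (hn : 1 ≤ n) : n ≤ S.d n := by
  induction n, hn using Nat.le_induction with
  | base => rw [S.hd1]
  | succ n hn ih => have := (S.d_pos_lt n hn).2; omega

theorem pi_mem (m : ℕ) (x : linf) : S.pi m x ∈ Esub S.d m := by
  rw [mem_Esub_iff]
  intro k hk
  rw [S.hpi, if_neg hk]

theorem pi_apply (m : ℕ) (x : linf) {k : ℕ} (h1 : 1 ≤ k) (h2 : k ≤ S.d m) : S.pi m x k = x k := by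
  rw [S.hpi, if_pos ⟨h1, h2⟩]

theorem linf_ext {x y : linf} (h : ∀ k, x k = y k) : x = y := lp.ext (funext h)

theorem pi_congr (m : ℕ) {x y : linf} (h : ∀ k, 1 ≤ k → k ≤ S.d m → x k = y k) :
    S.pi m x = S.pi m y := by
  apply linf_ext
  intro k
  rw [S.hpi, S.hpi]
  split_ifs with hk
  · exact h k hk.1 hk.2
  · rfl

theorem pi_eq_self {m : ℕ} {x : linf} (h : x ∈ Esub S.d m) : S.pi m x = x := by
  apply linf_ext
  intro k
  rw [S.hpi]
  split_ifs with hk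
  · rfl
  · rw [(mem_Esub_iff _ _ _).1 h k hk]

/-- Explicit form of the step functionals. -/
theorem step_apply {n : ℕ} (hn : 2 ≤ n) {x : linf} (hx : x ∈ Esub S.d n) (j : ℕ) :
    S.iMap n (n + 1) x j = x j + if j ∈ Finset.Ioc (S.d n) (S.d (n + 1)) then
      (S.a * ((S.φ j).1 : ℝ) * x (S.φ j).2.1 +
        S.b * (((S.φ j).2.2.2.1 : ℤ) : ℝ) *
          ((x - S.iMap (S.φ j).2.2.1 n (S.pi (S.φ j).2.2.1 x)) (S.φ j).2.2.2.2)) else 0 := by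
  rw [S.histep n hn x hx, ← coordFn_apply, map_add, map_sum, coordFn_apply]
  congr 1
  simp only [map_smul, coordFn_apply, ek_apply]
  simp

theorem i_mem {n : ℕ} (hn : 1 ≤ n) {x : linf} (hx : x ∈ Esub S.d n) :
    S.iMap n (n + 1) x ∈ Esub S.d (n + 1) ∧ ∀ k, k ≤ S.d n → S.iMap n (n + 1) x k = x k := by
  have hx' := (mem_Esub_iff _ _ _).1 hx
  rcases hn.eq_or_lt with rfl | hn
  · rw [S.hi12 x hx]
    refine ⟨?_, fun k _ => rfl⟩
    rw [mem_Esub_iff]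
    intro k hk
    apply hx'
    rw [S.hd1]; rw [S.hd2] at hk; omega
  · constructor
    · rw [mem_Esub_iff]
      intro k hk
      rw [S.step_apply hn hx, if_neg, hx']
      · simp
      · have := (S.d_pos_lt n (by omega)).2
        omega
      · rw [Finset.mem_Ioc]; omega
    · intro k hk
      rw [S.step_apply hn hx, if_neg]
      · simp
      · rw [Finset.mem_Ioc]; omega

/-- `i_{m,n}` extended by the identity for `n = m`. -/
noncomputable def J (m n : ℕ) (x : linf) : linf := if n = m then x else S.iMap m n x

theorem J_self (m : ℕ) (x : linf) : S.J m m x = x := by simp [J]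

theorem J_lt {m n : ℕ} (h : m < n) (x : linf) : S.J m n x = S.iMap m n x := by
  simp [J, h.ne']

theorem J_succ {m n : ℕ} (hm : 1 ≤ m) (h : m ≤ n) {x : linf} (hx : x ∈ Esub S.d m) :
    S.J m (n + 1) x = S.iMap n (n + 1) (S.J m n x) := by
  rw [S.J_lt (by omega)]
  rcases h.eq_or_lt with rfl | h
  · rw [J_self]
  · rw [S.J_lt h, S.hicomp m n hm h x hx]

theorem J_mem {m n : ℕ} (hm : 1 ≤ m) (h : m ≤ n) {x : linf} (hx : x ∈ Esub S.d m) :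
    S.J m n x ∈ Esub S.d n := by
  induction n, h using Nat.le_induction with
  | base => rwa [J_self]
  | succ n hn ih =>
    rw [S.J_succ hm hn hx]
    exact (S.i_mem (by omega) ih).1

theorem J_coord {m n n' : ℕ} (hm : 1 ≤ m) (h : m ≤ n) (h' : n ≤ n') {x : linf}
    (hx : x ∈ Esub S.d m) {k : ℕ} (hk : k ≤ S.d n) : S.J m n' x k = S.J m n x k := by
  induction n', h' using Nat.le_induction with
  | base => rfl
  | succ n' hn ih =>
    rw [S.J_succ hm (by omega) hx, ← ih]
    exact (S.i_mem (by omega) (S.J_mem hm (by omega) hx)).2 k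
      (hk.trans (S.d_mono (by omega) hn))

theorem J_J {m n n' : ℕ} (hm : 1 ≤ m) (h : m ≤ n) (h' : n ≤ n') {x : linf}
    (hx : x ∈ Esub S.d m) : S.J n n' (S.J m n x) = S.J m n' x := by
  induction n', h' using Nat.le_induction with
  | base => rw [J_self]
  | succ n' hn ih =>
    rw [S.J_succ (by omega) hn (S.J_mem hm h hx), ih, S.J_succ hm (by omega) hx]

theorem P_coord {m n : ℕ} (hm : 1 ≤ m) (h : m ≤ n) (x : linf) {k : ℕ} (hk : k ≤ S.d n) :
    S.P m x k = S.J m n (S.pi m x) k := by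
  refine tendsto_nhds_unique (S.hPlim m hm x k) ?_
  refine tendsto_const_nhds.congr' ?_
  filter_upwards [eventually_gt_atTop n] with n' hn'
  rw [← S.J_lt (by omega), S.J_coord hm h hn'.le (S.pi_mem m x) hk]

theorem P_low {m : ℕ} (hm : 1 ≤ m) (x : linf) {k : ℕ} (h1 : 1 ≤ k) (hk : k ≤ S.d m) :
    S.P m x k = x k := by
  rw [S.P_coord hm le_rfl x hk, J_self, S.pi_apply m x h1 hk]

theorem P_ext {m m' : ℕ} (hm : 1 ≤ m) (hm' : 1 ≤ m') {x y : linf}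
    (h : ∀ n, m ≤ n → m' ≤ n → S.J m n (S.pi m x) = S.J m' n (S.pi m' y)) :
    S.P m x = S.P m' y := by
  apply linf_ext
  intro k
  set n := max (max m m') k
  have hk : k ≤ S.d n := (le_max_right _ _).trans (S.d_ge n (by omega))
  rw [S.P_coord hm (n := n) (by omega) x hk, S.P_coord hm' (n := n) (by omega) y hk,
    h n (by omega) (by omega)]

theorem P_congr {m : ℕ} (hm : 1 ≤ m) {x y : linf} (h : ∀ k, 1 ≤ k → k ≤ S.d m → x k = y k) :
    S.P m x = S.P m y := by
  apply S.P_ext hm hm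
  intro n _ _
  rw [S.pi_congr m h]

theorem pi_P {m n : ℕ} (hm : 1 ≤ m) (h : m ≤ n) (x : linf) :
    S.pi n (S.P m x) = S.J m n (S.pi m x) := by
  rw [← S.pi_eq_self (S.J_mem hm h (S.pi_mem m x))]
  apply S.pi_congr
  intro k _ hk
  exact S.P_coord hm h x hk

/-- `P_n P_m = P_m` for `m ≤ n` -/
theorem P_P_ge {m n : ℕ} (hn : 1 ≤ n) (h : m ≤ n) (x : linf) : S.P n (S.P m x) = S.P m x := by
  rcases Nat.eq_zero_or_pos m with rfl | hm
  · rw [S.hP0]; simp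
  · apply S.P_ext hn hm
    intro n' h1 h2
    rw [S.pi_P hm h, S.J_J hm h h1 (S.pi_mem m x)]

/-- `P_m P_n = P_m` for `m ≤ n` -/
theorem P_P_le {m n : ℕ} (hm : 1 ≤ m) (h : m ≤ n) (x : linf) : S.P m (S.P n x) = S.P m x := by
  apply S.P_congr hm
  intro k h1 h2
  exact S.P_low (by omega) x h1 (h2.trans (S.d_mono hm h))

theorem P_pi {m : ℕ} (hm : 1 ≤ m) (x : linf) : S.P m (S.pi m x) = S.P m x := by
  apply S.P_congr hm
  intro k h1 h2
  exact S.pi_apply m x h1 h2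

theorem P_mem (m : ℕ) (x : linf) : S.P m x ∈ Xsub S := by
  rcases Nat.eq_zero_or_pos m with rfl | hm
  · rw [S.hP0]; simp
  · rw [← S.P_pi hm]
    apply Submodule.le_topologicalClosure
    apply Submodule.subset_span
    simp only [Set.mem_iUnion]
    exact ⟨m, hm, _, S.pi_mem m x, rfl⟩

theorem phi_spec {n k : ℕ} (hn : 2 ≤ n) (h1 : S.d n < k) (h2 : k ≤ S.d (n + 1)) :
    ((S.φ k).1 = 1 ∨ (S.φ k).1 = -1) ∧ ((S.φ k).2.2.2.1 = 1 ∨ (S.φ k).2.2.2.1 = -1) ∧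
        1 ≤ (S.φ k).2.2.1 ∧ (S.φ k).2.2.1 < n ∧ 1 ≤ (S.φ k).2.1 ∧
        (S.φ k).2.1 ≤ S.d (S.φ k).2.2.1 ∧
        1 ≤ (S.φ k).2.2.2.2 ∧ (S.φ k).2.2.2.2 ≤ S.d n :=
  (S.hφ n hn).mapsTo ⟨h1, h2⟩

theorem P_step {n k : ℕ} (hn : 2 ≤ n) (h1 : S.d n < k) (h2 : k ≤ S.d (n + 1)) (x : linf) :
    S.P n x k = S.a * ((S.φ k).1 : ℝ) * x (S.φ k).2.1 +
        S.b * (((S.φ k).2.2.2.1 : ℤ) : ℝ) *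
          (x (S.φ k).2.2.2.2 - S.P (S.φ k).2.2.1 x (S.φ k).2.2.2.2) := by
  obtain ⟨_, _, p1, p2, p3, p4, p5, p6⟩ := S.phi_spec hn h1 h2
  rw [S.P_coord (by omega) (Nat.le_succ n) x h2, S.J_lt (by omega),
    S.step_apply hn (S.pi_mem n x), if_pos (Finset.mem_Ioc.2 ⟨h1, h2⟩), S.hpi n x k,
    if_neg (by omega), _root_.zero_add, S.pi_apply n x p3 (p4.trans (S.d_mono p1 p2.le))]
  congr 2
  rw [← coordFn_apply, map_sub, coordFn_apply, coordFn_apply, S.pi_apply n x p5 p6,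
    S.P_coord p1 p2.le x p6, S.J_lt p2]
  rw [S.pi_congr (S.φ k).2.2.1 (x := S.pi n x) (y := x)
    fun l l1 l2 => S.pi_apply n x l1 (l2.trans (S.d_mono p1 p2.le))]

theorem P_tendsto (x : linf) (hx : x ∈ Xsub S) : Tendsto (fun n => S.P n x) atTop (nhds x) := by
  have hspan : ∀ y ∈ Submodule.span ℝ (⋃ m ∈ {m : ℕ | 1 ≤ m}, (S.P m) '' (Esub S.d m : Set linf)),
      ∀ᶠ n in atTop, S.P n y = y := by
    intro y hy
    induction hy using Submodule.span_induction with
    | mem y hy =>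
      simp only [Set.mem_iUnion] at hy
      obtain ⟨m, hm, z, hz, rfl⟩ := hy
      filter_upwards [eventually_ge_atTop m] with n hn
      exact S.P_P_ge (le_trans hm hn) hn z
    | zero => simp
    | add y z _ _ h1 h2 =>
      filter_upwards [h1, h2] with n e1 e2
      rw [map_add, e1, e2]
    | smul c y _ h1 =>
      filter_upwards [h1] with n e1
      rw [map_smul, e1]
  rw [Metric.tendsto_atTop']
  intro ε hε
  have hl := S.hlam
  have hx' : x ∈ closure (Submodule.span ℝ
      (⋃ m ∈ {m : ℕ | 1 ≤ m}, (S.P m) '' (Esub S.d m : Set linf)) : Set linf) := hx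
  obtain ⟨y, hy, hxy⟩ := Metric.mem_closure_iff.1 hx' (ε / (S.lam + 1)) (by positivity)
  obtain ⟨N, hN⟩ := (eventually_atTop.1 (hspan y hy))
  refine ⟨N, fun n hn => ?_⟩
  have e1 := hN n hn.le
  rw [dist_eq_norm] at hxy ⊢
  have e2 : S.P n x - x = S.P n (x - y) - (x - y) := by
    rw [map_sub, e1]; abel
  rw [e2]
  have e3 := norm_sub_le (S.P n (x - y)) (x - y)
  have e4 := (S.P n).le_of_opNorm_le (S.hPnorm n) (x - y)
  rw [lt_div_iff₀ (by positivity)] at hxy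
  linarith

/-- `R_m = I - P_m` on `X`. -/
noncomputable def R (m : ℕ) : Xsub S →L[ℝ] Xsub S :=
  ContinuousLinearMap.codRestrict
    ((ContinuousLinearMap.id ℝ linf - S.P m).comp (Xsub S).subtypeL) (Xsub S)
    (fun x => (Xsub S).sub_mem x.2 (S.P_mem m _))

theorem R_coe (m : ℕ) (x : Xsub S) : ((S.R m x : Xsub S) : linf) = x - S.P m x := rfl

def Cset : Set (Xsub S →L[ℝ] ℝ) :=
  wstarCl {f : (Xsub S) →L[ℝ] ℝ | ∃ k : ℕ, 1 ≤ k ∧ f = Qe S k}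

theorem Qe_apply (k : ℕ) (x : Xsub S) : Qe S k x = (x : linf) k := rfl

theorem Qe_norm (k : ℕ) (x : Xsub S) : |Qe S k x| ≤ ‖x‖ := by
  rw [Qe_apply]
  exact lp.norm_apply_le_norm (E := fun _ : ℕ => ℝ) ENNReal.top_ne_zero (x : linf) k

theorem C_norm (f) (hf : f ∈ S.Cset) : ‖f‖ ≤ 1 := by
  refine ContinuousLinearMap.opNorm_le_bound _ zero_le_one fun y => ?_
  rw [_root_.one_mul, Real.norm_eq_abs]
  refine le_of_forall_pos_lt_add fun δ hδ => ?_
  obtain ⟨g, ⟨k, hk, rfl⟩, hg⟩ := hf {y} δ hδ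
  have h1 := hg y (by simp)
  have h2 := S.Qe_norm k y
  have := abs_sub_abs_le_abs_sub (f y) (Qe S k y)
  rw [abs_sub_comm] at this
  linarith

theorem Qe_mem (k : ℕ) (hk : 1 ≤ k) : Qe S k ∈ S.Cset := by
  intro s δ hδ
  exact ⟨_, ⟨k, hk, rfl⟩, fun y _ => by simpa using hδ⟩

theorem C_lim (U : Ultrafilter ℕ) (g : ℕ → Xsub S →L[ℝ] ℝ)
    (hg : ∀ᶠ r in (U : Filter ℕ), g r ∈ S.Cset) :
    ∃ h ∈ S.Cset, ∀ y, Tendsto (fun r => g r y) (U : Filter ℕ) (nhds (h y)) := by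
  have hcomp := WeakDual.isCompact_closedBall (𝕜 := ℝ) (E := Xsub S) 0 1
  let G : ℕ → WeakDual ℝ (Xsub S) := fun r => StrongDual.toWeakDual (g r)
  have hmem : ((U.map G : Ultrafilter _) : Filter _) ≤
      𝓟 (WeakDual.toStrongDual ⁻¹' Metric.closedBall (0 : StrongDual ℝ (Xsub S)) 1) := by
    rw [le_principal_iff]
    change ∀ᶠ r in (U : Filter ℕ), _
    filter_upwards [hg] with r hr
    have := S.C_norm _ hr
    change g r ∈ Metric.closedBall (0 : StrongDual ℝ (Xsub S)) 1
    exact (mem_closedBall_zero_iff (E := StrongDual ℝ (Xsub S)) (a := g r)).2 this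
  obtain ⟨h, _, hh⟩ := hcomp.ultrafilter_le_nhds (U.map G) hmem
  have hT : Tendsto G (U : Filter ℕ) (nhds h) := hh
  have hy : ∀ y, Tendsto (fun r => g r y) (U : Filter ℕ)
      (nhds (WeakDual.toStrongDual h y)) := fun y =>
    ((WeakDual.eval_continuous y).tendsto h).comp hT
  refine ⟨WeakDual.toStrongDual h, ?_, hy⟩
  intro s δ hδ
  have hev : ∀ᶠ r in (U : Filter ℕ), ∀ y ∈ s, |g r y - WeakDual.toStrongDual h y| < δ / 2 := by
    rw [Filter.eventually_all_finset]
    intro y _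
    have := Metric.tendsto_nhds.1 (hy y) (δ / 2) (by positivity)
    simpa [Real.dist_eq] using this
  obtain ⟨r, hr1, hr2⟩ := (hev.and hg).exists
  obtain ⟨q, hq, hq'⟩ := hr2 s (δ / 2) (by positivity)
  refine ⟨q, hq, fun y hys => ?_⟩
  have e1 := hr1 y hys
  have e2 := hq' y hys
  have e3 := abs_sub_le (q y) (g r y) (WeakDual.toStrongDual h y)
  linarith

theorem absBD : BDAbs S.Cset S.R (Qe S) S.d S.a S.b (1 + S.lam) where
  hb := S.hb
  hba := S.hba
  ha := S.ha
  hC1 := S.C_norm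
  he := S.Qe_mem
  hlim := S.C_lim
  hR m := by
    refine ContinuousLinearMap.opNorm_le_bound _ (by linarith [S.hlam]) fun y => ?_
    have e3 := norm_sub_le (y : linf) (S.P m y)
    have e4 := (S.P m).le_of_opNorm_le (S.hPnorm m) (y : linf)
    rw [← S.R_coe] at e3
    simp only [Submodule.coe_norm] at *
    linarith
  hRid := by
    ext1 y
    apply Subtype.ext
    rw [R_coe, S.hP0]
    simp
  hRR m' m hm' := by
    ext1 y
    apply Subtype.ext
    rw [ContinuousLinearMap.comp_apply, R_coe, R_coe, R_coe, map_sub]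
    rcases le_total m' m with h | h
    · rw [max_eq_right h, S.P_P_le hm' h]; abel
    · rw [max_eq_left h, S.P_P_ge hm' h]; abel
  hR0 y := by
    rw [tendsto_subtype_rng]
    have := (S.P_tendsto y y.2).const_sub (y : linf)
    simpa [R_coe] using this

theorem exists_level (k : ℕ) (hk : 3 ≤ k) : ∃ n, 2 ≤ n ∧ S.d n < k ∧ k ≤ S.d (n + 1) := by
  have hex : ∃ n, k ≤ S.d (n + 1) := ⟨k, by have := S.d_ge (k + 1) (by omega); omega⟩
  have h1 := Nat.find_spec hex
  have h2 : 2 ≤ Nat.find hex := by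
    by_contra hlt
    have := S.d_mono (m := Nat.find hex + 1) (n := 2) (by omega) (by omega)
    rw [S.hd2] at this
    omega
  refine ⟨Nat.find hex, h2, ?_, h1⟩
  have := Nat.find_min hex (m := Nat.find hex - 1) (by omega)
  rw [Nat.sub_add_cancel (by omega)] at this
  omega

theorem limL (U : Ultrafilter ℕ) (k : ℕ → ℕ) (g : Xsub S →L[ℝ] ℝ)
    (hk : Tendsto k (U : Filter ℕ) atTop)
    (hg : ∀ y, Tendsto (fun r => Qe S (k r) y) (U : Filter ℕ) (nhds (g y))) :
    g ∈ TSet S.Cset S.R (Qe S) S.d S.a S.b 0 := by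
  have hlev : ∀ r, ∃ n, 3 ≤ k r → 2 ≤ n ∧ S.d n < k r ∧ k r ≤ S.d (n + 1) := by
    intro r
    by_cases h : 3 ≤ k r
    · obtain ⟨n, hn⟩ := S.exists_level _ h
      exact ⟨n, fun _ => hn⟩
    · exact ⟨0, fun h' => absurd h' h⟩
  choose n hn using hlev
  have h3 : ∀ᶠ r in (U : Filter ℕ), 3 ≤ k r := hk.eventually_ge_atTop 3
  have hntop : Tendsto n (U : Filter ℕ) atTop := by
    rw [tendsto_atTop]
    intro N
    filter_upwards [h3, hk.eventually_gt_atTop (S.d (N + 1))] with r hr hr'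
    by_contra hlt
    have h := hn r hr
    have := S.d_mono (m := n r + 1) (n := N + 1) (by omega) (by omega)
    omega
  let ph := fun r => S.φ (k r)
  let bs : ℕ → Xsub S →L[ℝ] ℝ := fun r =>
    (S.a * ((ph r).1 : ℝ)) • (Qe S (ph r).2.1).comp (S.R 0) +
      (S.b * ((ph r).2.2.2.1 : ℝ)) • (Qe S (ph r).2.2.2.2).comp (S.R (max (ph r).2.2.1 0))
  refine S.absBD.uclosed_T 0 g bs U ?_ ?_
  · filter_upwards [h3] with r hr
    obtain ⟨q1, q2, q3⟩ := hn r hr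
    obtain ⟨s1, s2, p1, p2, p3, p4, p5, p6⟩ := S.phi_spec q1 q2 q3
    right
    refine ⟨((ph r).2.2.1, (ph r).2.1, S.a * ((ph r).1 : ℝ), S.b * ((ph r).2.2.2.1 : ℝ)),
      ⟨p1, p3, p4, ?_, ?_⟩, ⟨_, ⟨Qe S (ph r).2.2.2.2, S.Qe_mem _ p5, rfl⟩, rfl⟩⟩
    · rcases s1 with s | s <;> simp [ph, s]
    · rcases s2 with s | s <;> simp [ph, s]
  · intro y
    have t1 : Tendsto (fun r => bs r y - Qe S (k r) y) (U : Filter ℕ) (nhds 0) := by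
      have t2 : Tendsto (fun r => ‖S.R (n r) y‖) (U : Filter ℕ) (nhds 0) := by
        have := ((S.absBD.hR0 y).comp hntop).norm
        simpa using this
      refine squeeze_zero_norm' ?_ t2
      filter_upwards [h3] with r hr
      obtain ⟨q1, q2, q3⟩ := hn r hr
      have e1 : bs r y = S.P (n r) y (k r) := by
        rw [S.P_step q1 q2 q3]
        simp only [bs, S.absBD.hRid, ContinuousLinearMap.comp_id, Nat.max_zero]
        rfl
      have e2 := S.Qe_norm (k r) (S.R (n r) y)
      have e3 : Qe S (k r) (S.R (n r) y) = Qe S (k r) y - S.P (n r) y (k r) := rfl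
      rw [e1, Real.norm_eq_abs, abs_sub_comm]
      rwa [e3] at e2
    have := t1.add (hg y)
    simpa using this

theorem struct (f) (hf : f ∈ S.Cset) :
    (∃ k, f = Qe S k) ∨ f ∈ TSet S.Cset S.R (Qe S) S.d S.a S.b 0 := by
  let F : ℕ → (Xsub S → ℝ) := fun k y => Qe S k y
  have hne : (Filter.comap F (nhds (fun y => f y))).NeBot := by
    rw [Filter.comap_neBot_iff]
    intro t ht
    rw [nhds_pi, Filter.mem_pi] at ht
    obtain ⟨I, hI, s, hs, hst⟩ := ht
    have : ∀ y, ∃ δ > 0, Metric.ball (f y) δ ⊆ s y := fun y => Metric.mem_nhds_iff.1 (hs y)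
    choose δ hδ hδs using this
    have : ∃ δ' > 0, ∀ y ∈ hI.toFinset, δ' ≤ δ y := by
      rcases hI.toFinset.eq_empty_or_nonempty with h | h
      · exact ⟨1, one_pos, by simp [h]⟩
      · obtain ⟨y0, hy0, hmin⟩ := Finset.exists_min_image hI.toFinset δ h
        exact ⟨δ y0, hδ y0, hmin⟩
    obtain ⟨δ', hδ', hle⟩ := this
    obtain ⟨_, ⟨k, _, rfl⟩, hk⟩ := hf hI.toFinset δ' hδ'
    refine ⟨k, hst fun y hy => hδs y ?_⟩
    have hy' : y ∈ hI.toFinset := by simpa using hy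
    rw [Metric.mem_ball, Real.dist_eq]
    exact (hk y hy').trans_le (hle y hy')
  let U := Ultrafilter.of (Filter.comap F (nhds (fun y => f y)))
  have hU : Tendsto F (U : Filter ℕ) (nhds (fun y => f y)) :=
    (Filter.tendsto_comap).mono_left (Ultrafilter.of_le _)
  have hU' : ∀ y, Tendsto (fun k => Qe S k y) (U : Filter ℕ) (nhds (f y)) :=
    fun y => (tendsto_pi_nhds.1 hU) y
  rcases ultra_dich U id with ⟨k, hk⟩ | h
  · left
    refine ⟨k, ?_⟩
    ext y
    refine tendsto_nhds_unique (hU' y) (tendsto_const_nhds.congr' ?_)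
    filter_upwards [hk] with r hr
    rw [← hr]; rfl
  · right
    exact S.limL U id f h hU'

end BDSetup

/-- Proposition 4.3: for every `ε > 0` the modified ε-Szlenk index of the
weak*-closure `C` of `{Q e_k^*}` is finite. -/
theorem stmt_16 (S : BDSetup) (ε : ℝ) (hε : 0 < ε) :
    ∃ n : ℕ,
      PmodSet (Xsub S) ε
        (wstarCl {f : (Xsub S) →L[ℝ] ℝ | ∃ k : ℕ, 1 ≤ k ∧ f = Qe S k}) (n : Ordinal) = ∅ := by
  obtain ⟨n, hn⟩ := S.absBD.final S.struct S.limL hε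
  exact ⟨n, Set.subset_empty_iff.1 (hn ▸ Pmod_sub ε S.Cset n)⟩
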